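/- arXiv:2206.01175 — 7 statements merged into one kernel-verified Lean document; each statement's English description precedes it below -/
import Mathlib

section
/- Let m, η, r, g, ζ, ρ, Cd, ς be positive real constants and let p, v, a, T, u : ℝ → ℝ be differentiable functions satisfying the nonlinear longitudinal vehicle dynamics with zero wind speed and zero road slope: p' = v, v' = a, m·a(t) = (η/r)·T(t) − (1/2)·ρ·Cd·v(t)² − m·g·ζ for all t, together with the power-train dynamics T'(t) = (T̃(t) − T(t))/ς, where the desired torque is the feedback-linearizing law T̃(t) = (r/η)·[ (1/2)·ρ·Cd·v(t)·(2·ς·a(t) + v(t)) + m·g·ζ + m·u(t) ]. Then the acceleration satisfies the linear first-order dynamics a'(t) = (u(t) − a(t))/ς for all t; i.e., the closed-loop system is the linear model p' = v, v' = a, a' = −(1/ς)a + (1/ς)u. -/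
/-- Feedback linearization of the nonlinear longitudinal vehicle dynamics:
under the feedback-linearizing desired torque law, the closed-loop acceleration
satisfies the linear first-order dynamics `a' = (u - a)/ς`. -/
theorem stmt_0
    (m η r g ζ ρ Cd ς : ℝ)
    (hm : 0 < m) (hη : 0 < η) (hr : 0 < r) (hg : 0 < g) (hζ : 0 < ζ)
    (hρ : 0 < ρ) (hCd : 0 < Cd) (hς : 0 < ς)
    (p v a T u : ℝ → ℝ)
    (hp : Differentiable ℝ p) (hv : Differentiable ℝ v)
    (ha : Differentiable ℝ a) (hT : Differentiable ℝ T)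
    (hu : Differentiable ℝ u)
    (Tdes : ℝ → ℝ)
    (hTdes : ∀ t, Tdes t =
      (r / η) * ((1 / 2) * ρ * Cd * v t * (2 * ς * a t + v t) + m * g * ζ + m * u t))
    (hpv : ∀ t, deriv p t = v t)
    (hva : ∀ t, deriv v t = a t)
    (hforce : ∀ t, m * a t = (η / r) * T t - (1 / 2) * ρ * Cd * (v t) ^ 2 - m * g * ζ)
    (hpt : ∀ t, deriv T t = (Tdes t - T t) / ς) :
    ∀ t, deriv a t = (u t - a t) / ς := by
  intro t
  have h_jerk : m * deriv a t = (η / r) * deriv T t - ρ * Cd * v t * a t := by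
    have h_left : HasDerivAt (fun s => m * a s) (m * deriv a t) t :=
      (ha t).hasDerivAt.const_mul m
    have h_right := ((((hT t).hasDerivAt.const_mul (η / r)).sub
      (((hv t).hasDerivAt.pow 2).const_mul ((1 / 2) * ρ * Cd))).sub_const (m * g * ζ))
    rw [funext hforce] at h_left
    rw [h_left.unique h_right, hva t]
    push_cast
    ring
  have h_torque : ς * ((η / r) * deriv T t) =
      (1 / 2) * ρ * Cd * v t * (2 * ς * a t + v t) + m * g * ζ + m * u t
        - (η / r) * T t := by
    rw [hpt t, hTdes t]
    field_simp
  rw [eq_div_iff hς.ne']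
  apply mul_left_cancel₀ hm.ne'
  linear_combination ς * h_jerk + h_torque + hforce t
end

section
/- Let ς and k be real numbers with ς > 0, k > 0 and 1 + k > ς. Then every complex root z of the closed-loop characteristic polynomial ς·X³ + (1 + k)·X² + k·X + k has strictly negative real part (i.e., the feedback loop of the static linear policy μ(e) = k·e with the plant G(s) = (s² + s + 1)/(ς·s²·(s + 1/ς)) is asymptotically stable). -/
/-- Routh–Hurwitz criterion for real cubics (sufficiency): if `a, b, c, d > 0` and `a d < b c`, then
every complex root of `a X³ + b X² + c X + d` has strictly negative real part. -/
theorem re_neg_of_cubic_eq_zero {a b c d : ℝ} (ha : 0 < a) (hb : 0 < b) (hc : 0 < c) (hd : 0 < d)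
    (h : a * d < b * c) {z : ℂ}
    (hz : (a : ℂ) * z ^ 3 + (b : ℂ) * z ^ 2 + (c : ℂ) * z + (d : ℂ) = 0) : z.re < 0 := by
  obtain ⟨x, y⟩ := z
  have hre : a * (x ^ 3 - 3 * x * y ^ 2) + b * (x ^ 2 - y ^ 2) + c * x + d = 0 := by
    have := congrArg Complex.re hz
    simp [pow_succ] at this
    linear_combination this
  have him : y * (a * (3 * x ^ 2 - y ^ 2) + 2 * b * x + c) = 0 := by
    have := congrArg Complex.im hz
    simp [pow_succ] at this
    linear_combination this
  by_contra! hx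
  replace hx : 0 ≤ x := hx
  rcases mul_eq_zero.mp him with rfl | hy
  · have : 0 < a * x ^ 3 + b * x ^ 2 + c * x + d := by positivity
    linarith
  · have hpos : 0 ≤ 8 * a ^ 2 * x ^ 3 + 8 * a * b * x ^ 2 + (2 * a * c + 2 * b ^ 2) * x := by
      positivity
    have hzero : 8 * a ^ 2 * x ^ 3 + 8 * a * b * x ^ 2 + (2 * a * c + 2 * b ^ 2) * x
        + (b * c - a * d) = 0 := by
      linear_combination (3 * a * x + b) * hy - a * hre
    linarith

/-- Routh–Hurwitz stability of the closed loop with the static linear policy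
`μ(e) = k e`: if `ς > 0`, `k > 0` and `1 + k > ς`, every complex root of the
closed-loop characteristic polynomial `ς X³ + (1 + k) X² + k X + k` has
strictly negative real part. -/
theorem stmt_6 (ς k : ℝ) (hς : 0 < ς) (hk : 0 < k) (hkς : 1 + k > ς) :
    ∀ z : ℂ, (ς : ℂ) * z ^ 3 + (1 + (k : ℂ)) * z ^ 2 + (k : ℂ) * z + (k : ℂ) = 0 →
      z.re < 0 := by
  intro z hz
  exact re_neg_of_cubic_eq_zero hς (by linarith) hk hk (mul_lt_mul_of_pos_right hkς hk)
    (by push_cast; exact hz)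
end

section
/- Let ς and k be real numbers with 0 < ς < 1 and k > 1/(1 − ς). Then every complex root z of the polynomial ς·X⁴ + X³ + k·X² + k·X + k has strictly negative real part (i.e., the feedback loop of the integral-action linear policy, with open-loop transfer s⁻¹·G(s), is asymptotically stable). -/
/-- The real and imaginary parts (the latter divided by `y`) of the equation
`ς z⁴ + z³ + k z² + k z + k = 0` at `z = x + i y`, with `w = y²`, have no common solution with
`x ≥ 0` when `k (1 - ς) > 1`: eliminating `w` leaves a polynomial in `x` with negative
coefficients. -/
lemma quartic_re_im_ne_zero_of_nonneg {ς k x w : ℝ} (hς : 0 < ς) (hk : 0 < k)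
    (hu : 1 < k * (1 - ς)) (hk4 : 4 * ς ≤ k) (hx : 0 ≤ x)
    (hre : ς * (x ^ 4 - 6 * x ^ 2 * w + w ^ 2) + x ^ 3 - 3 * x * w + k * (x ^ 2 - w) + k * x + k = 0)
    (him : ς * (4 * x ^ 3 - 4 * x * w) + 3 * x ^ 2 - w + 2 * k * x + k = 0) : False := by
  have elim : k * (k * (1 - ς) - 1) + 2 * k * (k + 1 - 4 * ς) * x
      + 4 * k * (ς * (k - 4 * ς) + 2 + ς) * x ^ 2 + (8 + 32 * ς * k) * x ^ 3
      + (48 * ς + 32 * ς ^ 2 * k) * x ^ 4 + 96 * ς ^ 2 * x ^ 5 + 64 * ς ^ 3 * x ^ 6 = 0 := by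
    set D := 4 * ς * x + 1 with hD
    set N := 4 * ς * x ^ 3 + 3 * x ^ 2 + 2 * k * x + k with hN
    have hw : w * D = N := by rw [hD, hN]; linear_combination -him
    have h : ς * (x ^ 4 * D ^ 2 - 6 * x ^ 2 * (N * D) + N ^ 2) + x ^ 3 * D ^ 2 - 3 * x * (N * D)
        + k * (x ^ 2 * D ^ 2 - N * D) + k * x * D ^ 2 + k * D ^ 2 = 0 := by
      rw [← hw]; linear_combination D ^ 2 * hre
    rw [hD, hN] at h
    linear_combination -h
  have h₀ : 0 < k * (k * (1 - ς) - 1) := mul_pos hk (by linarith)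
  have h₁ : 0 ≤ k + 1 - 4 * ς := by linarith
  have h₂ : 0 ≤ k - 4 * ς := by linarith
  have : 0 < k * (k * (1 - ς) - 1) + 2 * k * (k + 1 - 4 * ς) * x
      + 4 * k * (ς * (k - 4 * ς) + 2 + ς) * x ^ 2 + (8 + 32 * ς * k) * x ^ 3
      + (48 * ς + 32 * ς ^ 2 * k) * x ^ 4 + 96 * ς ^ 2 * x ^ 5 + 64 * ς ^ 3 * x ^ 6 := by
    positivity
  exact this.ne' elim

/-- Routh–Hurwitz stability of the closed loop with the integral-action linear
policy (open loop `s⁻¹ G(s)`): if `0 < ς < 1` and `k > 1/(1 - ς)`, every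
complex root of `ς X⁴ + X³ + k X² + k X + k` has strictly negative real part. -/
theorem stmt_7 (ς k : ℝ) (hς : 0 < ς) (hς1 : ς < 1) (hk : k > 1 / (1 - ς)) :
    ∀ z : ℂ, (ς : ℂ) * z ^ 4 + z ^ 3 + (k : ℂ) * z ^ 2 + (k : ℂ) * z + (k : ℂ) = 0 →
      z.re < 0 := by
  rintro ⟨x, y⟩ hz
  by_contra! hx
  simp only at hx
  have h1ς : 0 < 1 - ς := by linarith
  have hu : 1 < k * (1 - ς) := (div_lt_iff₀ h1ς).mp hk
  have hk0 : 0 < k := lt_trans (by positivity) hk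
  have hk4 : 4 * ς ≤ k := by
    refine le_trans ?_ hk.le
    rw [le_div_iff₀ h1ς]
    nlinarith [sq_nonneg (2 * ς - 1)]
  have hre := congrArg Complex.re hz
  have him := congrArg Complex.im hz
  simp [pow_succ] at hre him
  rcases eq_or_ne y 0 with rfl | hy
  · have : 0 < ς * x ^ 4 + x ^ 3 + k * x ^ 2 + k * x + k := by positivity
    exact this.ne' (by linear_combination hre)
  · refine quartic_re_im_ne_zero_of_nonneg (w := y ^ 2) hς hk0 hu hk4 hx
      (by linear_combination hre) (mul_left_cancel₀ hy ?_)
    linear_combination him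
end

section
/- Let ς > 0 and k > 0 be real numbers and define, for real s with s ≠ 0 and ς·s + 1 ≠ 0, G(s) = (s² + s + 1)/(ς·s²·(s + 1/ς)). Then G(s)/(1 + k·G(s)) tends to 1/k ≠ 0 as s → 0 (along nonzero real s). Hence the static (memory-less) policy does not reject a constant input disturbance: the steady-state effect of a step disturbance on the output is the nonzero value 1/k. -/
open Filter Topology

/-- Clearing the common denominator in a feedback loop around `n / d` with static gain `k`. -/
lemma div_div_one_add_mul_div {K : Type*} [Field K] (n k : K) {d : K} (hd : d ≠ 0) :
    n / d / (1 + k * (n / d)) = n / (d + k * n) := by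
  have h : 1 + k * (n / d) = (d + k * n) / d := by field_simp
  rw [h, div_div_div_cancel_right₀ hd]

/-- With the plant `G(s) = (s² + s + 1)/(ς s² (s + 1/ς))` in unity negative
feedback with static gain `k > 0`, the input-disturbance-to-output transfer
`G(s)/(1 + k G(s))` tends to `1/k ≠ 0` as `s → 0` along nonzero real `s`:
the static (memory-less) policy does not reject a constant input disturbance. -/
theorem stmt_9 (ς k : ℝ) (hς : 0 < ς) (hk : 0 < k)
    (G : ℝ → ℝ)
    (hG : ∀ s, s ≠ 0 → ς * s + 1 ≠ 0 →
      G s = (s ^ 2 + s + 1) / (ς * s ^ 2 * (s + 1 / ς))) :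
    Tendsto (fun s => G s / (1 + k * G s)) (𝓝[≠] (0 : ℝ)) (𝓝 (1 / k)) ∧
    (1 / k : ℝ) ≠ 0 := by
  refine ⟨?_, (one_div_pos.mpr hk).ne'⟩
  have hlim : Tendsto (fun s : ℝ => (s ^ 2 + s + 1) / (s ^ 2 * (ς * s + 1) + k * (s ^ 2 + s + 1)))
      (𝓝[≠] 0) (𝓝 (1 / k)) := by
    have hcont : ContinuousAt
        (fun s : ℝ => (s ^ 2 + s + 1) / (s ^ 2 * (ς * s + 1) + k * (s ^ 2 + s + 1))) 0 :=
      ContinuousAt.div (by fun_prop) (by fun_prop) (by simpa using hk.ne')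
    simpa using hcont.tendsto.mono_left nhdsWithin_le_nhds
  have hne : ∀ᶠ s : ℝ in 𝓝[≠] 0, ς * s + 1 ≠ 0 := by
    have hcont : ContinuousAt (fun s : ℝ => ς * s + 1) 0 := by fun_prop
    exact (hcont.eventually_ne (by simp)).filter_mono nhdsWithin_le_nhds
  refine hlim.congr' ?_
  filter_upwards [hne, self_mem_nhdsWithin] with s hs hs0
  have hs0 : s ≠ 0 := hs0
  have hden : ς * s ^ 2 * (s + 1 / ς) = s ^ 2 * (ς * s + 1) := by field_simp
  rw [hG s hs0 hs, hden, div_div_one_add_mul_div _ _ (mul_ne_zero (pow_ne_zero 2 hs0) hs)]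
end

section
/- Let ς, k, r be real numbers with ς > 0, k > 0 and 1 + k > ς. Let p, v, a : ℝ → ℝ be differentiable functions satisfying the closed-loop equations p' = v, v' = a, a'(t) = ( −a(t) + k·( r − (p(t) + v(t) + a(t)) ) )/ς for all t ≥ 0. Then (p(t), v(t), a(t)) → (r, 0, 0) as t → ∞; in particular the output y = p + v + a converges to the constant reference r, so the static policy achieves null steady-state tracking error in the undisturbed training environment. -/
open Filter Topology

/-- A quadratic Lyapunov function for `x''' + A x'' + B x' + B x = 0`, perturbed by `ε` so that it
decreases strictly. -/
noncomputable def jerkLyapunov (A B ε x y z : ℝ) : ℝ :=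
  (z + A * y) ^ 2 / 2 + B * (y ^ 2 + 2 * x * y + A * x ^ 2) / 2 + ε * (x * (z + A * y) - y * z)

/-- The derivative of `jerkLyapunov` along `x' = y`, `y' = z`, `z' = -B x - B y - A z`. -/
def jerkLyapunovRate (A B ε x y z : ℝ) : ℝ :=
  -((A - 1) * B * y ^ 2) + ε * (-(B * x ^ 2) - z ^ 2 + (A + 1) * y * z + (A + B) * y ^ 2)

lemma exists_jerkLyapunov_bounds {A B : ℝ} (hA : 1 < A) (hB : 0 < B) :
    ∃ ε K c : ℝ, 0 < K ∧ 0 < c ∧ ∀ x y z : ℝ,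
      x ^ 2 + y ^ 2 + z ^ 2 ≤ K * jerkLyapunov A B ε x y z ∧
      jerkLyapunovRate A B ε x y z ≤ -c * jerkLyapunov A B ε x y z := by
  have hA1 : 0 < A - 1 := sub_pos.2 hA
  have hA0 : 0 < A := by linarith
  obtain ⟨L, hL⟩ : ∃ L, L = (1 + 2 * A ^ 2) * (A + 1) / (A - 1) := ⟨_, rfl⟩
  have hL0 : 0 < L := by rw [hL]; positivity
  obtain ⟨K, hK⟩ : ∃ K, K = 4 + 2 * L / B := ⟨_, rfl⟩
  have hK0 : 0 < K := by rw [hK]; positivity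
  obtain ⟨ε, hε⟩ : ∃ ε, ε = min ((A - 1) * B / 2 / (A + B + (A + 1) ^ 2 / 2))
    (1 / 2 / (K * (A + 2))) := ⟨_, rfl⟩
  have hε0 : 0 < ε := by rw [hε]; apply lt_min <;> positivity
  have hε_rate : ε * (A + B + (A + 1) ^ 2 / 2) ≤ (A - 1) * B / 2 := by
    rw [← le_div_iff₀ (by positivity), hε]; exact min_le_left _ _
  have hε_cross : ε * (K * (A + 2)) ≤ 1 / 2 := by
    rw [← le_div_iff₀ (by positivity), hε]; exact min_le_right _ _
  obtain ⟨d, hd⟩ : ∃ d, d = min ((A - 1) * B / 2) (min (ε * B) (ε / 2)) := ⟨_, rfl⟩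
  have hd0 : 0 < d := by rw [hd]; refine lt_min ?_ (lt_min ?_ ?_) <;> positivity
  have hdy : d ≤ (A - 1) * B / 2 := by rw [hd]; exact min_le_left _ _
  have hdx : d ≤ ε * B := by rw [hd]; exact (min_le_right _ _).trans (min_le_left _ _)
  have hdz : d ≤ ε / 2 := by rw [hd]; exact (min_le_right _ _).trans (min_le_right _ _)
  obtain ⟨M, hM⟩ : ∃ M, M = 1 + A ^ 2 + B * (A + 2) + ε * (A + 2) := ⟨_, rfl⟩
  have hM0 : 0 < M := by rw [hM]; positivity
  refine ⟨ε, 2 * K, d / M, by positivity, by positivity, fun x y z => ?_⟩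
  have hcross : |x * (z + A * y) - y * z| ≤ (A + 2) * (x ^ 2 + y ^ 2 + z ^ 2) := by
    rw [abs_le]
    constructor <;>
      linarith [sq_nonneg (x + z), sq_nonneg (x - z), sq_nonneg (y + z), sq_nonneg (y - z),
        mul_nonneg hA0.le (sq_nonneg (x + y)), mul_nonneg hA0.le (sq_nonneg (x - y)),
        mul_nonneg hA0.le (sq_nonneg x), mul_nonneg hA0.le (sq_nonneg y),
        mul_nonneg hA0.le (sq_nonneg z), sq_nonneg x, sq_nonneg y, sq_nonneg z]
  obtain ⟨hcross_lower, hcross_upper⟩ := abs_le.1 hcross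
  constructor
  · have hQ : (A - 1) * (x ^ 2 + y ^ 2) ≤ (A + 1) * (y ^ 2 + 2 * x * y + A * x ^ 2) := by
      linarith [sq_nonneg (2 * y + (A + 1) * x), sq_nonneg ((A - 1) * x)]
    have hQL : (1 + 2 * A ^ 2) * (x ^ 2 + y ^ 2) ≤ L * (y ^ 2 + 2 * x * y + A * x ^ 2) := by
      rw [hL, div_mul_eq_mul_div, le_div_iff₀ hA1]
      linarith [mul_le_mul_of_nonneg_left hQ (by positivity : 0 ≤ 1 + 2 * A ^ 2)]
    have hQ0 : 0 ≤ y ^ 2 + 2 * x * y + A * x ^ 2 := by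
      linarith [sq_nonneg (x + y), mul_nonneg hA1.le (sq_nonneg x)]
    have hunpert : x ^ 2 + y ^ 2 + z ^ 2 ≤
        K * ((z + A * y) ^ 2 / 2 + B * (y ^ 2 + 2 * x * y + A * x ^ 2) / 2) := by
      have hexp : K * ((z + A * y) ^ 2 / 2 + B * (y ^ 2 + 2 * x * y + A * x ^ 2) / 2) =
          2 * (z + A * y) ^ 2 + L * (y ^ 2 + 2 * x * y + A * x ^ 2)
          + (L / B * (z + A * y) ^ 2 + 2 * B * (y ^ 2 + 2 * x * y + A * x ^ 2)) := by
        rw [hK]; field_simp; ring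
      have hrest : 0 ≤ L / B * (z + A * y) ^ 2 + 2 * B * (y ^ 2 + 2 * x * y + A * x ^ 2) := by
        positivity
      rw [hexp]
      linarith [sq_nonneg (z + 2 * A * y), mul_nonneg (sq_nonneg A) (sq_nonneg x)]
    unfold jerkLyapunov
    linarith [mul_le_mul_of_nonneg_left hcross_lower (mul_pos hε0 hK0).le,
      mul_le_mul_of_nonneg_right hε_cross (by positivity : 0 ≤ x ^ 2 + y ^ 2 + z ^ 2)]
  · have hupper : jerkLyapunov A B ε x y z ≤ M * (x ^ 2 + y ^ 2 + z ^ 2) := by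
      have hw : (z + A * y) ^ 2 / 2 ≤ (1 + A ^ 2) * (x ^ 2 + y ^ 2 + z ^ 2) := by
        linarith [sq_nonneg (z - A * y), sq_nonneg x, sq_nonneg y, sq_nonneg (A * x),
          sq_nonneg (A * z)]
      have hQ : (y ^ 2 + 2 * x * y + A * x ^ 2) / 2 ≤ (A + 2) * (x ^ 2 + y ^ 2 + z ^ 2) := by
        linarith [sq_nonneg (x - y), sq_nonneg x, sq_nonneg y, sq_nonneg z,
          mul_nonneg hA0.le (sq_nonneg x), mul_nonneg hA0.le (sq_nonneg y),
          mul_nonneg hA0.le (sq_nonneg z)]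
      unfold jerkLyapunov
      rw [hM]
      linarith [mul_le_mul_of_nonneg_left hQ hB.le,
        mul_le_mul_of_nonneg_left hcross_upper hε0.le]
    have hrate : jerkLyapunovRate A B ε x y z ≤ -(d * (x ^ 2 + y ^ 2 + z ^ 2)) := by
      unfold jerkLyapunovRate
      have hyz : (A + 1) * y * z ≤ z ^ 2 / 2 + (A + 1) ^ 2 / 2 * y ^ 2 := by
        linarith [sq_nonneg ((A + 1) * y - z)]
      linarith [mul_le_mul_of_nonneg_left hyz hε0.le,
        mul_le_mul_of_nonneg_right hε_rate (sq_nonneg y),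
        mul_le_mul_of_nonneg_right hdx (sq_nonneg x),
        mul_le_mul_of_nonneg_right hdy (sq_nonneg y),
        mul_le_mul_of_nonneg_right hdz (sq_nonneg z)]
    have hscaled := mul_le_mul_of_nonneg_left hupper (by positivity : 0 ≤ d / M)
    have hcancel : d / M * (M * (x ^ 2 + y ^ 2 + z ^ 2)) = d * (x ^ 2 + y ^ 2 + z ^ 2) := by
      field_simp
    linarith

lemma le_mul_exp_of_hasDerivAt_le {V V' : ℝ → ℝ} {c : ℝ}
    (hV : ∀ t, 0 ≤ t → HasDerivAt V (V' t) t) (hle : ∀ t, 0 ≤ t → V' t ≤ -c * V t)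
    {t : ℝ} (ht : 0 ≤ t) : V t ≤ V 0 * Real.exp (-(c * t)) := by
  have hderiv : ∀ s, 0 ≤ s → HasDerivAt (fun s => V s * Real.exp (c * s))
      (V' s * Real.exp (c * s) + V s * (Real.exp (c * s) * (c * 1))) s := fun s hs =>
    (hV s hs).mul ((hasDerivAt_id s).const_mul c).exp
  have hanti : AntitoneOn (fun s => V s * Real.exp (c * s)) (Set.Ici 0) := by
    refine antitoneOn_of_hasDerivWithinAt_nonpos (convex_Ici 0)
      (fun s hs => (hderiv s hs).continuousAt.continuousWithinAt)
      (fun s hs => (hderiv s (interior_subset hs)).hasDerivWithinAt) fun s hs => ?_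
    nlinarith [hle s (interior_subset hs), Real.exp_pos (c * s)]
  have h := hanti (Set.mem_Ici.2 le_rfl) (Set.mem_Ici.2 ht) ht
  simp only [mul_zero, Real.exp_zero, mul_one] at h
  rw [Real.exp_neg, ← div_eq_mul_inv, le_div_iff₀ (Real.exp_pos _)]
  exact h

lemma tendsto_zero_of_sq_le {α : Type*} {l : Filter α} {f g : α → ℝ}
    (hfg : ∀ᶠ t in l, f t ^ 2 ≤ g t) (hg : Tendsto g l (𝓝 0)) : Tendsto f l (𝓝 0) := by
  have hsq : Tendsto (fun t => f t ^ 2) l (𝓝 0) :=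
    squeeze_zero' (Eventually.of_forall fun t => sq_nonneg _) hfg hg
  refine (tendsto_zero_iff_abs_tendsto_zero _).2 ?_
  simpa [Function.comp_def, Real.sqrt_sq_eq_abs] using hsq.sqrt

/-- Static linear policy in the undisturbed training environment: the closed
loop `p' = v`, `v' = a`, `a' = (-a + k (r - (p + v + a)))/ς` with `ς > 0`,
`k > 0`, `1 + k > ς` satisfies `(p, v, a) → (r, 0, 0)` as `t → ∞`; in
particular the output `y = p + v + a` converges to the reference `r`. -/
theorem stmt_13 (ς k r : ℝ) (hς : 0 < ς) (hk : 0 < k) (hkς : 1 + k > ς)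
    (p v a : ℝ → ℝ)
    (hp : Differentiable ℝ p) (hv : Differentiable ℝ v) (ha : Differentiable ℝ a)
    (hpv : ∀ t, 0 ≤ t → deriv p t = v t)
    (hva : ∀ t, 0 ≤ t → deriv v t = a t)
    (hcl : ∀ t, 0 ≤ t →
      deriv a t = (-a t + k * (r - (p t + v t + a t))) / ς) :
    Tendsto (fun t => (p t, v t, a t)) atTop (𝓝 (r, 0, 0)) := by
  obtain ⟨A, hA⟩ : ∃ A, A = (1 + k) / ς := ⟨_, rfl⟩
  obtain ⟨B, hB⟩ : ∃ B, B = k / ς := ⟨_, rfl⟩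
  have hA1 : 1 < A := by rw [hA, one_lt_div hς]; exact hkς
  have hB0 : 0 < B := by rw [hB]; positivity
  obtain ⟨ε, K, c, hK, hc, hbounds⟩ := exists_jerkLyapunov_bounds hA1 hB0
  have hx : ∀ t, 0 ≤ t → HasDerivAt (fun t => p t - r) (v t) t := fun t ht =>
    hpv t ht ▸ (hp t).hasDerivAt.sub_const r
  have hy : ∀ t, 0 ≤ t → HasDerivAt v (a t) t := fun t ht => hva t ht ▸ (hv t).hasDerivAt
  have hz : ∀ t, 0 ≤ t → HasDerivAt a (-(B * (p t - r)) - B * v t - A * a t) t := by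
    intro t ht
    refine (ha t).hasDerivAt.congr_deriv ?_
    rw [hcl t ht, hA, hB]
    field_simp
    ring
  have hV : ∀ t, 0 ≤ t → HasDerivAt (fun t => jerkLyapunov A B ε (p t - r) (v t) (a t))
      (jerkLyapunovRate A B ε (p t - r) (v t) (a t)) t := by
    intro t ht
    have hx := hx t ht
    have hy := hy t ht
    have hz := hz t ht
    have hw := hz.add (hy.const_mul A)
    have h := (((hw.pow 2).div_const 2).add ((((hy.pow 2).add ((hx.const_mul 2).mul hy)).add
      ((hx.pow 2).const_mul A)).const_mul B |>.div_const 2)).add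
      (((hx.mul hw).sub (hy.mul hz)).const_mul ε)
    refine h.congr_deriv ?_
    simp only [jerkLyapunovRate, Pi.add_apply]
    push_cast
    ring
  have hdecay : Tendsto (fun t => K * (jerkLyapunov A B ε (p 0 - r) (v 0) (a 0) *
      Real.exp (-(c * t)))) atTop (𝓝 0) := by
    have hexp : Tendsto (fun t => Real.exp (-(c * t))) atTop (𝓝 0) :=
      Real.tendsto_exp_neg_atTop_nhds_zero.comp (tendsto_id.const_mul_atTop hc)
    simpa using (hexp.const_mul _).const_mul K
  have hsum : ∀ t, 0 ≤ t → (p t - r) ^ 2 + v t ^ 2 + a t ^ 2 ≤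
      K * (jerkLyapunov A B ε (p 0 - r) (v 0) (a 0) * Real.exp (-(c * t))) := by
    intro t ht
    exact (hbounds _ _ _).1.trans (mul_le_mul_of_nonneg_left
      (le_mul_exp_of_hasDerivAt_le hV (fun s _ => (hbounds _ _ _).2) ht) hK.le)
  have hx_lim : Tendsto (fun t => p t - r) atTop (𝓝 0) := by
    refine tendsto_zero_of_sq_le ?_ hdecay
    filter_upwards [eventually_ge_atTop 0] with t ht
    linarith [hsum t ht, sq_nonneg (v t), sq_nonneg (a t)]
  have hy_lim : Tendsto v atTop (𝓝 0) := by
    refine tendsto_zero_of_sq_le ?_ hdecay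
    filter_upwards [eventually_ge_atTop 0] with t ht
    linarith [hsum t ht, sq_nonneg (p t - r), sq_nonneg (a t)]
  have hz_lim : Tendsto a atTop (𝓝 0) := by
    refine tendsto_zero_of_sq_le ?_ hdecay
    filter_upwards [eventually_ge_atTop 0] with t ht
    linarith [hsum t ht, sq_nonneg (p t - r), sq_nonneg (v t)]
  exact (tendsto_sub_nhds_zero_iff.1 hx_lim).prodMk_nhds (hy_lim.prodMk_nhds hz_lim)
end

section
/- Let ς, k, r be real numbers with 0 < ς < 1 and k > 1/(1 − ς). Let q, p, v, a : ℝ → ℝ be differentiable functions satisfying the integral-action closed-loop equations q'(t) = r − (p(t) + v(t) + a(t)), p' = v, v' = a, a'(t) = ( −a(t) + k·q(t) )/ς for all t ≥ 0. Then (q(t), p(t), v(t), a(t)) → (0, r, 0, 0) as t → ∞; in particular the output y = p + v + a converges to the constant reference r. -/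
open Filter Topology

/-- A function with `W' ≤ -c W` on `[0, ∞)`, `c > 0`, that bounds a nonnegative function
forces the latter to vanish at infinity. -/
theorem tendsto_zero_of_deriv_le_neg_mul {W W' f : ℝ → ℝ} {c : ℝ} (hc : 0 < c)
    (hW : ∀ t, 0 ≤ t → HasDerivAt W (W' t) t) (hle : ∀ t, 0 ≤ t → W' t ≤ -c * W t)
    (hf : ∀ t, 0 ≤ f t) (hfW : ∀ t, f t ≤ W t) : Tendsto f atTop (𝓝 0) := by
  have hder : ∀ t, 0 ≤ t → HasDerivAt (fun s => W s * Real.exp (c * s))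
      ((W' t + c * W t) * Real.exp (c * t)) t := fun t ht => by
    have hexp : HasDerivAt (fun s => Real.exp (c * s)) (Real.exp (c * t) * (c * 1)) t :=
      ((hasDerivAt_id t).const_mul c).exp
    exact ((hW t ht).mul hexp).congr_deriv (by ring)
  have hanti : AntitoneOn (fun s => W s * Real.exp (c * s)) (Set.Ici 0) := by
    refine antitoneOn_of_deriv_nonpos (convex_Ici 0)
      (fun t ht => (hder t ht).continuousAt.continuousWithinAt) ?_ ?_
    · intro t ht
      rw [interior_Ici] at ht
      exact (hder t (le_of_lt ht)).differentiableAt.differentiableWithinAt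
    · intro t ht
      rw [interior_Ici] at ht
      rw [(hder t (le_of_lt ht)).deriv]
      exact mul_nonpos_of_nonpos_of_nonneg (by linarith [hle t (le_of_lt ht)])
        (Real.exp_pos _).le
  have hlim : Tendsto (fun t => W 0 * Real.exp (-(c * t))) atTop (𝓝 0) := by
    simpa using (Real.tendsto_exp_neg_atTop_nhds_zero.comp
      (tendsto_id.const_mul_atTop hc)).const_mul (W 0)
  refine tendsto_of_tendsto_of_tendsto_of_le_of_le' tendsto_const_nhds hlim
    (Eventually.of_forall hf) ?_
  filter_upwards [eventually_ge_atTop 0] with t ht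
  have h := hanti Set.self_mem_Ici ht ht
  simp only [mul_zero, Real.exp_zero, mul_one] at h
  rw [Real.exp_neg, ← div_eq_mul_inv, le_div_iff₀ (Real.exp_pos _)]
  exact (mul_le_mul_of_nonneg_right (hfW t) (Real.exp_pos _).le).trans h

/-- Weighted Young inequality. -/
theorem mul_mul_le_mul_sq_add {m : ℝ} (hm : 0 < m) (α x y : ℝ) :
    α * x * y ≤ m * x ^ 2 + α ^ 2 / (4 * m) * y ^ 2 := by
  have h : m * x ^ 2 + α ^ 2 / (4 * m) * y ^ 2 - α * x * y
      = (2 * m * x - α * y) ^ 2 / (4 * m) := by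
    field_simp
    ring
  have : 0 ≤ (2 * m * x - α * y) ^ 2 / (4 * m) := by positivity
  linarith

/-- The quadratic form `n₃ V + n₂ x₃ x₄ + n₁ x₂ x₃ + x₁ x₂` is a strict Lyapunov function for the
four-dimensional Schwarz form with positive parameters, for suitable weights. -/
theorem exists_schwarz_lyapunov {b₁ b₂ b₃ b₄ : ℝ} (h₁ : 0 < b₁) (h₂ : 0 < b₂) (h₃ : 0 < b₃)
    (h₄ : 0 < b₄) : ∃ n₁ n₂ n₃ c : ℝ, 0 < c ∧ ∀ x₁ x₂ x₃ x₄ : ℝ,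
      x₁ ^ 2 + x₂ ^ 2 + x₃ ^ 2 + x₄ ^ 2 ≤
        n₃ * (b₁ * b₂ * b₃ * x₁ ^ 2 + b₂ * b₃ * x₂ ^ 2 + b₃ * x₃ ^ 2 + x₄ ^ 2)
          + n₂ * (x₃ * x₄) + n₁ * (x₂ * x₃) + x₁ * x₂ ∧
      n₃ * (-2 * b₄ * x₄ ^ 2) + n₂ * (x₄ ^ 2 - b₂ * x₂ * x₄ - b₃ * x₃ ^ 2 - b₄ * x₃ * x₄)
          + n₁ * (x₃ ^ 2 - b₂ * x₂ ^ 2 - b₁ * x₁ * x₃ + x₂ * x₄)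
          + (x₂ ^ 2 - b₁ * x₁ ^ 2 + x₁ * x₃) ≤
        -c * (n₃ * (b₁ * b₂ * b₃ * x₁ ^ 2 + b₂ * b₃ * x₂ ^ 2 + b₃ * x₃ ^ 2 + x₄ ^ 2)
          + n₂ * (x₃ * x₄) + n₁ * (x₂ * x₃) + x₁ * x₂) := by
  obtain ⟨n₁, hn₁, hn₁b⟩ : ∃ n₁ : ℝ, 0 < n₁ ∧ n₁ * b₂ = 3 :=
    ⟨3 / b₂, by positivity, by field_simp⟩
  set A := (1 - n₁ * b₁) ^ 2 / (4 * (b₁ / 2)) with hA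
  have hA0 : 0 ≤ A := by positivity
  obtain ⟨n₂, hn₂, hn₂b⟩ : ∃ n₂ : ℝ, 0 < n₂ ∧ n₂ * b₃ = n₁ + A + 2 :=
    ⟨(n₁ + A + 2) / b₃, by positivity, by field_simp⟩
  set B := (n₁ - n₂ * b₂) ^ 2 / (4 * 1) with hB
  set D := (-(n₂ * b₄)) ^ 2 / (4 * 1) with hD
  have large : ∀ {b : ℝ}, 0 < b → ∀ R, ∀ᶠ n : ℝ in atTop, R ≤ n * b := fun hb R =>
    (tendsto_id.atTop_mul_const hb).eventually_ge_atTop R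
  obtain ⟨n₃, hx₁, hx₂, hx₃, hx₄, hd, hn₃⟩ :=
    ((large (by positivity : 0 < b₁ * b₂ * b₃) (n₁ + n₂ + 2)).and <|
      (large (by positivity : 0 < b₂ * b₃) (n₁ + n₂ + 2)).and <|
      (large h₃ (n₁ + n₂ + 2)).and <| (large one_pos (n₁ + n₂ + 2)).and <|
      (large (by positivity : 0 < 2 * b₄) (n₂ + B + D + 1)).and (eventually_gt_atTop 0)).exists
  set C := n₃ * (b₁ * b₂ * b₃) + n₃ * (b₂ * b₃) + n₃ * b₃ + n₃ * 1 + n₁ + n₂ + 1 with hC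
  have hC0 : 0 < C := by positivity
  have hm : 0 < min (b₁ / 2) 1 := by positivity
  refine ⟨n₁, n₂, n₃, min (b₁ / 2) 1 / C, by positivity, fun x₁ x₂ x₃ x₄ => ⟨?_, ?_⟩⟩
  · nlinarith [mul_le_mul_of_nonneg_right hx₁ (sq_nonneg x₁),
      mul_le_mul_of_nonneg_right hx₂ (sq_nonneg x₂),
      mul_le_mul_of_nonneg_right hx₃ (sq_nonneg x₃),
      mul_le_mul_of_nonneg_right hx₄ (sq_nonneg x₄),
      mul_nonneg hn₂.le (sq_nonneg (x₃ + x₄)), mul_nonneg hn₁.le (sq_nonneg (x₂ + x₃)),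
      sq_nonneg (x₁ + x₂), mul_nonneg hn₁.le (sq_nonneg x₁), mul_nonneg hn₁.le (sq_nonneg x₂),
      mul_nonneg hn₁.le (sq_nonneg x₃), mul_nonneg hn₁.le (sq_nonneg x₄),
      mul_nonneg hn₂.le (sq_nonneg x₁), mul_nonneg hn₂.le (sq_nonneg x₂),
      mul_nonneg hn₂.le (sq_nonneg x₃), mul_nonneg hn₂.le (sq_nonneg x₄)]
  · have hup : n₃ * (b₁ * b₂ * b₃ * x₁ ^ 2 + b₂ * b₃ * x₂ ^ 2 + b₃ * x₃ ^ 2 + x₄ ^ 2)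
          + n₂ * (x₃ * x₄) + n₁ * (x₂ * x₃) + x₁ * x₂
        ≤ C * (x₁ ^ 2 + x₂ ^ 2 + x₃ ^ 2 + x₄ ^ 2) := by
      have hdiag : n₃ * (b₁ * b₂ * b₃ * x₁ ^ 2 + b₂ * b₃ * x₂ ^ 2 + b₃ * x₃ ^ 2 + x₄ ^ 2)
          ≤ (n₃ * (b₁ * b₂ * b₃) + n₃ * (b₂ * b₃) + n₃ * b₃ + n₃ * 1)
            * (x₁ ^ 2 + x₂ ^ 2 + x₃ ^ 2 + x₄ ^ 2) := by
        rw [← sub_nonneg]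
        ring_nf
        positivity
      have h34 : n₂ * (x₃ * x₄) ≤ n₂ * (x₁ ^ 2 + x₂ ^ 2 + x₃ ^ 2 + x₄ ^ 2) :=
        mul_le_mul_of_nonneg_left (by nlinarith [sq_nonneg (x₃ - x₄)]) hn₂.le
      have h23 : n₁ * (x₂ * x₃) ≤ n₁ * (x₁ ^ 2 + x₂ ^ 2 + x₃ ^ 2 + x₄ ^ 2) :=
        mul_le_mul_of_nonneg_left (by nlinarith [sq_nonneg (x₂ - x₃)]) hn₁.le
      have h12 : x₁ * x₂ ≤ x₁ ^ 2 + x₂ ^ 2 + x₃ ^ 2 + x₄ ^ 2 := by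
        nlinarith [sq_nonneg (x₁ - x₂)]
      rw [hC]
      linarith
    have hdown : n₃ * (-2 * b₄ * x₄ ^ 2)
          + n₂ * (x₄ ^ 2 - b₂ * x₂ * x₄ - b₃ * x₃ ^ 2 - b₄ * x₃ * x₄)
          + n₁ * (x₃ ^ 2 - b₂ * x₂ ^ 2 - b₁ * x₁ * x₃ + x₂ * x₄)
          + (x₂ ^ 2 - b₁ * x₁ ^ 2 + x₁ * x₃)
        ≤ -min (b₁ / 2) 1 * (x₁ ^ 2 + x₂ ^ 2 + x₃ ^ 2 + x₄ ^ 2) := by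
      have y13 := mul_mul_le_mul_sq_add (half_pos h₁) (1 - n₁ * b₁) x₁ x₃
      have y24 := mul_mul_le_mul_sq_add one_pos (n₁ - n₂ * b₂) x₂ x₄
      have y34 := mul_mul_le_mul_sq_add one_pos (-(n₂ * b₄)) x₃ x₄
      rw [← hA] at y13
      rw [← hB] at y24
      rw [← hD] at y34
      have e₁ := mul_le_mul_of_nonneg_right (min_le_left (b₁ / 2) 1) (sq_nonneg x₁)
      have e₂ := mul_le_mul_of_nonneg_right (min_le_right (b₁ / 2) 1) (sq_nonneg x₂)
      have e₃ := mul_le_mul_of_nonneg_right (min_le_right (b₁ / 2) 1) (sq_nonneg x₃)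
      have e₄ := mul_le_mul_of_nonneg_right (min_le_right (b₁ / 2) 1) (sq_nonneg x₄)
      have d₂ := congrArg (· * x₂ ^ 2) hn₁b
      have d₃ := congrArg (· * x₃ ^ 2) hn₂b
      have d₄ := mul_le_mul_of_nonneg_right hd (sq_nonneg x₄)
      linarith
    refine hdown.trans ?_
    rw [neg_mul, neg_mul, neg_le_neg_iff, div_mul_eq_mul_div, div_le_iff₀ hC0]
    exact (mul_le_mul_of_nonneg_left hup hm.le).trans_eq (by ring)

/-- Solutions of the four-dimensional Schwarz form with positive parameters tend to zero. -/
theorem tendsto_zero_of_schwarz {b₁ b₂ b₃ b₄ : ℝ} (h₁ : 0 < b₁) (h₂ : 0 < b₂) (h₃ : 0 < b₃)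
    (h₄ : 0 < b₄) {x₁ x₂ x₃ x₄ : ℝ → ℝ}
    (d₁ : ∀ t, 0 ≤ t → HasDerivAt x₁ (x₂ t) t)
    (d₂ : ∀ t, 0 ≤ t → HasDerivAt x₂ (-b₁ * x₁ t + x₃ t) t)
    (d₃ : ∀ t, 0 ≤ t → HasDerivAt x₃ (-b₂ * x₂ t + x₄ t) t)
    (d₄ : ∀ t, 0 ≤ t → HasDerivAt x₄ (-b₃ * x₃ t - b₄ * x₄ t) t) :
    Tendsto x₁ atTop (𝓝 0) ∧ Tendsto x₂ atTop (𝓝 0) ∧ Tendsto x₃ atTop (𝓝 0) ∧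
      Tendsto x₄ atTop (𝓝 0) := by
  obtain ⟨n₁, n₂, n₃, c, hc, hV⟩ := exists_schwarz_lyapunov h₁ h₂ h₃ h₄
  have key : Tendsto (fun t => x₁ t ^ 2 + x₂ t ^ 2 + x₃ t ^ 2 + x₄ t ^ 2) atTop (𝓝 0) := by
    refine tendsto_zero_of_deriv_le_neg_mul hc (fun t ht => ?_)
      (fun t _ => (hV (x₁ t) (x₂ t) (x₃ t) (x₄ t)).2) (fun t => by positivity)
      (fun t => (hV (x₁ t) (x₂ t) (x₃ t) (x₄ t)).1)
    have e₁ := d₁ t ht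
    have e₂ := d₂ t ht
    have e₃ := d₃ t ht
    have e₄ := d₄ t ht
    refine (((((((e₁.fun_pow 2).const_mul (b₁ * b₂ * b₃)).fun_add
      ((e₂.fun_pow 2).const_mul (b₂ * b₃))).fun_add ((e₃.fun_pow 2).const_mul b₃)).fun_add
      (e₄.fun_pow 2)).const_mul n₃).fun_add ((e₃.fun_mul e₄).const_mul n₂) |>.fun_add
      ((e₂.fun_mul e₃).const_mul n₁) |>.fun_add (e₁.fun_mul e₂)).congr_deriv ?_
    push_cast
    ring
  have comp : ∀ x : ℝ → ℝ, (∀ t, x t ^ 2 ≤ x₁ t ^ 2 + x₂ t ^ 2 + x₃ t ^ 2 + x₄ t ^ 2) →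
      Tendsto x atTop (𝓝 0) := fun x hx => by
    have hsq : Tendsto (fun t => x t ^ 2) atTop (𝓝 0) :=
      squeeze_zero (fun t => sq_nonneg _) hx key
    rw [tendsto_zero_iff_abs_tendsto_zero]
    simpa [Function.comp_def, Real.sqrt_sq_eq_abs] using hsq.sqrt
  refine ⟨comp _ fun t => ?_, comp _ fun t => ?_, comp _ fun t => ?_, comp _ fun t => ?_⟩ <;>
    linarith [sq_nonneg (x₁ t), sq_nonneg (x₂ t), sq_nonneg (x₃ t), sq_nonneg (x₄ t)]

/-- Integral-action linear policy in the undisturbed training environment: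
the closed loop `q' = r - (p + v + a)`, `p' = v`, `v' = a`,
`a' = (-a + k q)/ς` with `0 < ς < 1` and `k > 1/(1 - ς)` satisfies
`(q, p, v, a) → (0, r, 0, 0)` as `t → ∞`; in particular the output
`y = p + v + a` converges to the reference `r`. -/
theorem stmt_14 (ς k r : ℝ) (hς : 0 < ς) (hς1 : ς < 1) (hk : k > 1 / (1 - ς))
    (q p v a : ℝ → ℝ)
    (hq : Differentiable ℝ q) (hp : Differentiable ℝ p)
    (hv : Differentiable ℝ v) (ha : Differentiable ℝ a)
    (hqe : ∀ t, 0 ≤ t → deriv q t = r - (p t + v t + a t))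
    (hpv : ∀ t, 0 ≤ t → deriv p t = v t)
    (hva : ∀ t, 0 ≤ t → deriv v t = a t)
    (hcl : ∀ t, 0 ≤ t → deriv a t = (-a t + k * q t) / ς) :
    Tendsto (fun t => (q t, p t, v t, a t)) atTop (𝓝 (0, r, 0, 0)) := by
  have hς' : 0 < 1 - ς := sub_pos.2 hς1
  have hb₁ : 0 < 1 / (1 - ς) := by positivity
  have hk0 : 0 < k := hb₁.trans hk
  have hb₃ : 0 < k * (1 - ς) / ς := by positivity
  have dq := fun t ht => (hq t).hasDerivAt.congr_deriv (hqe t ht)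
  have dp := fun t ht => (hp t).hasDerivAt.congr_deriv (hpv t ht)
  have dv := fun t ht => (hv t).hasDerivAt.congr_deriv (hva t ht)
  have da := fun t ht => (ha t).hasDerivAt.congr_deriv (hcl t ht)
  -- coordinates bringing the closed loop to Schwarz form
  obtain ⟨t₁, t₂, t₃, t₄⟩ := tendsto_zero_of_schwarz hb₁ (sub_pos.2 hk) hb₃ (one_div_pos.2 hς)
    (x₁ := fun t => p t - r) (x₂ := v) (x₃ := fun t => a t + 1 / (1 - ς) * (p t - r))
    (x₄ := fun t => (-a t + k * q t) / ς + k * v t)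
    (fun t ht => (dp t ht).sub_const r)
    (fun t ht => (dv t ht).congr_deriv (by ring))
    (fun t ht => ((da t ht).fun_add (((dp t ht).sub_const r).const_mul _)).congr_deriv (by ring))
    (fun t ht => ((((da t ht).fun_neg.fun_add ((dq t ht).const_mul k)).div_const ς).fun_add
      ((dv t ht).const_mul k)).congr_deriv (by field_simp; ring))
  have tp : Tendsto p atTop (𝓝 r) := by simpa using t₁.add_const r
  have ta : Tendsto a atTop (𝓝 0) := by simpa using t₃.sub (t₁.const_mul (1 / (1 - ς)))
  have tq : Tendsto q atTop (𝓝 0) := by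
    have h := (((t₄.sub (t₂.const_mul k)).const_mul ς).add ta).div_const k
    simp only [mul_zero, sub_zero, add_zero, zero_div] at h
    refine h.congr fun t => ?_
    field_simp
    ring
  exact tq.prodMk_nhds (tp.prodMk_nhds (t₂.prodMk_nhds ta))
end

section
/- Let ς, k, r, w be real numbers with 0 < ς < 1 and k > 1/(1 − ς), with w a constant disturbance. Let q, p, v, a : ℝ → ℝ be differentiable functions satisfying q'(t) = r − (p(t) + v(t) + a(t)), p' = v, v' = a, a'(t) = ( −a(t) + k·q(t) )/ς + w for all t ≥ 0. Then (q(t), p(t), v(t), a(t)) → (−ς·w/k, r, 0, 0) as t → ∞; in particular the output y = p + v + a converges to the reference r, so the integral-action policy achieves null steady-state spacing error despite the constant disturbance. -/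
open Filter Topology

/-- A nonnegative function with `f' ≤ -c f` on `[0, ∞)`, `c > 0`, tends to `0`. -/
theorem tendsto_zero_of_hasDerivAt_le_neg_mul {f f' : ℝ → ℝ} {c : ℝ} (hc : 0 < c)
    (hf : ∀ t, 0 ≤ t → HasDerivAt f (f' t) t) (hf0 : ∀ t, 0 ≤ f t)
    (hle : ∀ t, 0 ≤ t → f' t ≤ -c * f t) : Tendsto f atTop (𝓝 0) := by
  have hder : ∀ t, 0 ≤ t → HasDerivAt (fun s => f s * Real.exp (c * s))
      (f' t * Real.exp (c * t) + f t * (Real.exp (c * t) * c)) t := fun t ht => by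
    have he : HasDerivAt (fun s : ℝ => c * s) c t := by
      simpa using (hasDerivAt_id t).const_mul c
    exact (hf t ht).mul he.exp
  have hanti : AntitoneOn (fun s => f s * Real.exp (c * s)) (Set.Ici 0) := by
    refine antitoneOn_of_deriv_nonpos (convex_Ici 0)
      (fun t ht => (hder t ht).continuousAt.continuousWithinAt)
      (fun t ht => (hder t (interior_subset ht)).differentiableAt.differentiableWithinAt)
      fun t ht => ?_
    have ht : 0 ≤ t := interior_subset ht
    rw [(hder t ht).deriv]
    nlinarith [hle t ht, Real.exp_pos (c * t)]
  have hbound : ∀ t, 0 ≤ t → f t ≤ f 0 * Real.exp (-(c * t)) := fun t ht => by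
    have h := hanti Set.self_mem_Ici ht ht
    simp only [mul_zero, Real.exp_zero, mul_one] at h
    rwa [Real.exp_neg, ← div_eq_mul_inv, le_div_iff₀ (Real.exp_pos _)]
  have hexp : Tendsto (fun t => f 0 * Real.exp (-(c * t))) atTop (𝓝 0) := by
    simpa using (Real.tendsto_exp_neg_atTop_nhds_zero.comp
      (tendsto_id.const_mul_atTop hc)).const_mul (f 0)
  exact squeeze_zero' (Eventually.of_forall hf0)
    ((eventually_ge_atTop 0).mono hbound) hexp

/-- Weighted Young inequality. -/
theorem mul_mul_le_half_add_sq {m : ℝ} (hm : 0 < m) (n x y : ℝ) :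
    n * (x * y) ≤ m / 2 * x ^ 2 + n ^ 2 / (2 * m) * y ^ 2 := by
  have h : m / 2 * x ^ 2 + n ^ 2 / (2 * m) * y ^ 2 - n * (x * y)
      = (m * x - n * y) ^ 2 / (2 * m) := by
    field_simp
    ring
  have : 0 ≤ (m * x - n * y) ^ 2 / (2 * m) := by positivity
  linarith

/-- A four-dimensional linear system in Schwarz form with positive coefficients admits a strict
quadratic Lyapunov function: the standard diagonal one plus small cross terms. -/
theorem exists_schwarz_lyapunov_s16 {α β γ δ : ℝ} (hα : 0 < α) (hβ : 0 < β) (hγ : 0 < γ)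
    (hδ : 0 < δ) : ∃ K m n M μ : ℝ, 0 < M ∧ 0 < μ ∧ ∀ x₁ x₂ x₃ x₄ : ℝ,
      x₁ ^ 2 + x₂ ^ 2 + x₃ ^ 2 + x₄ ^ 2 ≤
        K * (α * β * γ * x₁ ^ 2 + β * γ * x₂ ^ 2 + γ * x₃ ^ 2 + x₄ ^ 2)
          + m * (x₃ * x₄) + n * (x₂ * x₃) + x₁ * x₂ ∧
      K * (α * β * γ * x₁ ^ 2 + β * γ * x₂ ^ 2 + γ * x₃ ^ 2 + x₄ ^ 2)
          + m * (x₃ * x₄) + n * (x₂ * x₃) + x₁ * x₂ ≤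
        M * (x₁ ^ 2 + x₂ ^ 2 + x₃ ^ 2 + x₄ ^ 2) ∧
      K * (-2 * δ * x₄ ^ 2)
          + m * ((-β * x₂ + x₄) * x₄ + x₃ * (-γ * x₃ - δ * x₄))
          + n * ((-α * x₁ + x₃) * x₃ + x₂ * (-β * x₂ + x₄))
          + (x₂ * x₂ + x₁ * (-α * x₁ + x₃)) ≤
        -μ * (x₁ ^ 2 + x₂ ^ 2 + x₃ ^ 2 + x₄ ^ 2) := by
  obtain ⟨n, hn0, hn⟩ : ∃ n : ℝ, 0 < n ∧ β * n = 2 :=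
    ⟨2 / β, by positivity, by field_simp⟩
  obtain ⟨m, hm0, hm⟩ : ∃ m : ℝ, 0 < m ∧ γ * m = 1 + n + (1 - α * n) ^ 2 / (2 * α) :=
    ⟨(1 + n + (1 - α * n) ^ 2 / (2 * α)) / γ, by positivity, by field_simp⟩
  have hlarge : ∀ {c : ℝ}, 0 < c → ∀ b : ℝ, ∀ᶠ K in atTop, b ≤ K * c := fun hc b =>
    (tendsto_id.atTop_mul_const hc).eventually_ge_atTop b
  obtain ⟨K, hK, hK₁, hK₂, hK₃, hK₄, hK₅⟩ := ((eventually_ge_atTop 0).and <|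
    (hlarge (by positivity : 0 < α * β * γ) (m + n + 2)).and <|
    (hlarge (by positivity : 0 < β * γ) (m + n + 2)).and <|
    (hlarge hγ (m + n + 2)).and <| (eventually_ge_atTop (m + n + 2)).and <|
    hlarge (by positivity : 0 < 2 * δ)
      (m + (n - β * m) ^ 2 / 2 + (δ * m) ^ 2 / 2 + 1 / 2)).exists
  refine ⟨K, m, n, K * (α * β * γ + β * γ + γ + 1) + m + n + 1, min (α / 2) (1 / 2),
    by positivity, by positivity, fun x₁ x₂ x₃ x₄ => ⟨?_, ?_, ?_⟩⟩
  · have h₁ := mul_le_mul_of_nonneg_right hK₁ (sq_nonneg x₁)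
    have h₂ := mul_le_mul_of_nonneg_right hK₂ (sq_nonneg x₂)
    have h₃ := mul_le_mul_of_nonneg_right hK₃ (sq_nonneg x₃)
    have h₄ := mul_le_mul_of_nonneg_right hK₄ (sq_nonneg x₄)
    have e₁ := mul_nonneg hm0.le (sq_nonneg (x₃ + x₄))
    have e₂ := mul_nonneg hn0.le (sq_nonneg (x₂ + x₃))
    nlinarith [sq_nonneg (x₁ + x₂), mul_nonneg hm0.le (sq_nonneg x₁),
      mul_nonneg hm0.le (sq_nonneg x₂), mul_nonneg hm0.le (sq_nonneg x₃),
      mul_nonneg hm0.le (sq_nonneg x₄), mul_nonneg hn0.le (sq_nonneg x₁),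
      mul_nonneg hn0.le (sq_nonneg x₂), mul_nonneg hn0.le (sq_nonneg x₃),
      mul_nonneg hn0.le (sq_nonneg x₄), sq_nonneg x₁, sq_nonneg x₂, sq_nonneg x₃, sq_nonneg x₄]
  · have hdiag : α * β * γ * x₁ ^ 2 + β * γ * x₂ ^ 2 + γ * x₃ ^ 2 + x₄ ^ 2 ≤
        (α * β * γ + β * γ + γ + 1) * (x₁ ^ 2 + x₂ ^ 2 + x₃ ^ 2 + x₄ ^ 2) := by
      have : 0 ≤ α * β * γ * (x₂ ^ 2 + x₃ ^ 2 + x₄ ^ 2) + β * γ * (x₁ ^ 2 + x₃ ^ 2 + x₄ ^ 2)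
        + γ * (x₁ ^ 2 + x₂ ^ 2 + x₄ ^ 2) + (x₁ ^ 2 + x₂ ^ 2 + x₃ ^ 2) := by positivity
      linarith
    have h₁ : x₃ * x₄ ≤ x₁ ^ 2 + x₂ ^ 2 + x₃ ^ 2 + x₄ ^ 2 := by
      nlinarith [sq_nonneg (x₃ - x₄), sq_nonneg x₁, sq_nonneg x₂]
    have h₂ : x₂ * x₃ ≤ x₁ ^ 2 + x₂ ^ 2 + x₃ ^ 2 + x₄ ^ 2 := by
      nlinarith [sq_nonneg (x₂ - x₃), sq_nonneg x₁, sq_nonneg x₄]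
    have h₃ : x₁ * x₂ ≤ x₁ ^ 2 + x₂ ^ 2 + x₃ ^ 2 + x₄ ^ 2 := by
      nlinarith [sq_nonneg (x₁ - x₂), sq_nonneg x₃, sq_nonneg x₄]
    linarith [mul_le_mul_of_nonneg_left hdiag hK, mul_le_mul_of_nonneg_left h₁ hm0.le,
      mul_le_mul_of_nonneg_left h₂ hn0.le]
  · have y₁ := mul_mul_le_half_add_sq hα (1 - α * n) x₁ x₃
    have y₂ := mul_mul_le_half_add_sq one_pos (n - β * m) x₂ x₄
    have y₃ := mul_mul_le_half_add_sq one_pos (-(δ * m)) x₃ x₄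
    have h₂ : β * n * x₂ ^ 2 = 2 * x₂ ^ 2 := by rw [hn]
    have h₃ : γ * m * x₃ ^ 2 = (1 + n + (1 - α * n) ^ 2 / (2 * α)) * x₃ ^ 2 := by rw [hm]
    have h₄ := mul_le_mul_of_nonneg_right hK₅ (sq_nonneg x₄)
    have g₁ := mul_le_mul_of_nonneg_right (min_le_left (α / 2) (1 / 2)) (sq_nonneg x₁)
    have g₂ := mul_le_mul_of_nonneg_right (min_le_right (α / 2) (1 / 2))
      (by positivity : 0 ≤ x₂ ^ 2 + x₃ ^ 2 + x₄ ^ 2)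
    linarith

/-- A four-dimensional linear system in Schwarz form with positive coefficients is
asymptotically stable. -/
theorem tendsto_zero_of_schwarz_form {α β γ δ : ℝ} (hα : 0 < α) (hβ : 0 < β) (hγ : 0 < γ)
    (hδ : 0 < δ) {x₁ x₂ x₃ x₄ : ℝ → ℝ}
    (h₁ : ∀ t, 0 ≤ t → HasDerivAt x₁ (x₂ t) t)
    (h₂ : ∀ t, 0 ≤ t → HasDerivAt x₂ (-α * x₁ t + x₃ t) t)
    (h₃ : ∀ t, 0 ≤ t → HasDerivAt x₃ (-β * x₂ t + x₄ t) t)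
    (h₄ : ∀ t, 0 ≤ t → HasDerivAt x₄ (-γ * x₃ t - δ * x₄ t) t) :
    Tendsto x₁ atTop (𝓝 0) ∧ Tendsto x₂ atTop (𝓝 0) ∧ Tendsto x₃ atTop (𝓝 0) ∧
      Tendsto x₄ atTop (𝓝 0) := by
  obtain ⟨K, m, n, M, μ, hM, hμ, hW⟩ := exists_schwarz_lyapunov_s16 hα hβ hγ hδ
  have hlim := tendsto_zero_of_hasDerivAt_le_neg_mul (c := μ / M) (by positivity)
    (f := fun t => K * (α * β * γ * x₁ t ^ 2 + β * γ * x₂ t ^ 2 + γ * x₃ t ^ 2 + x₄ t ^ 2)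
      + m * (x₃ t * x₄ t) + n * (x₂ t * x₃ t) + x₁ t * x₂ t)
    (f' := fun t => K * (-2 * δ * x₄ t ^ 2)
      + m * ((-β * x₂ t + x₄ t) * x₄ t + x₃ t * (-γ * x₃ t - δ * x₄ t))
      + n * ((-α * x₁ t + x₃ t) * x₃ t + x₂ t * (-β * x₂ t + x₄ t))
      + (x₂ t * x₂ t + x₁ t * (-α * x₁ t + x₃ t)))
    (fun t ht => by
      have d₁ := h₁ t ht
      have d₂ := h₂ t ht
      have d₃ := h₃ t ht
      have d₄ := h₄ t ht
      refine ((((((((d₁.pow 2).const_mul (α * β * γ)).add ((d₂.pow 2).const_mul (β * γ))).add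
        ((d₃.pow 2).const_mul γ)).add (d₄.pow 2)).const_mul K).add
        ((d₃.mul d₄).const_mul m)).add ((d₂.mul d₃).const_mul n)).add (d₁.mul d₂)
        |>.congr_deriv ?_
      push_cast
      ring)
    (fun t => le_trans (by positivity) (hW (x₁ t) (x₂ t) (x₃ t) (x₄ t)).1)
    (fun t _ => by
      obtain ⟨-, hle, hder⟩ := hW (x₁ t) (x₂ t) (x₃ t) (x₄ t)
      refine hder.trans ?_
      have h := mul_le_mul_of_nonneg_left hle (by positivity : 0 ≤ μ / M)
      rw [← mul_assoc (μ / M) M, div_mul_cancel₀ μ hM.ne'] at h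
      linarith)
  have key : ∀ x : ℝ → ℝ,
      (∀ t, x t ^ 2 ≤ x₁ t ^ 2 + x₂ t ^ 2 + x₃ t ^ 2 + x₄ t ^ 2) → Tendsto x atTop (𝓝 0) := by
    intro x hx
    have hsq : Tendsto (fun t => x t ^ 2) atTop (𝓝 0) :=
      squeeze_zero (fun t => sq_nonneg _)
        (fun t => (hx t).trans (hW (x₁ t) (x₂ t) (x₃ t) (x₄ t)).1) hlim
    rw [tendsto_zero_iff_abs_tendsto_zero]
    simpa [Function.comp_def, Real.sqrt_sq_eq_abs] using hsq.sqrt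
  refine ⟨key _ fun t => ?_, key _ fun t => ?_, key _ fun t => ?_, key _ fun t => ?_⟩ <;>
    linarith [sq_nonneg (x₁ t), sq_nonneg (x₂ t), sq_nonneg (x₃ t), sq_nonneg (x₄ t)]

/-- Integral-action policy under a constant disturbance `w`: the closed loop
`q' = r - (p + v + a)`, `p' = v`, `v' = a`, `a' = (-a + k q)/ς + w` with
`0 < ς < 1` and `k > 1/(1 - ς)` satisfies
`(q, p, v, a) → (-ς w / k, r, 0, 0)` as `t → ∞`; in particular the output
`y = p + v + a` converges to the reference `r`: null steady-state spacing
error despite the constant disturbance. -/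
theorem stmt_16 (ς k r w : ℝ) (hς : 0 < ς) (hς1 : ς < 1) (hk : k > 1 / (1 - ς))
    (q p v a : ℝ → ℝ)
    (hq : Differentiable ℝ q) (hp : Differentiable ℝ p)
    (hv : Differentiable ℝ v) (ha : Differentiable ℝ a)
    (hqe : ∀ t, 0 ≤ t → deriv q t = r - (p t + v t + a t))
    (hpv : ∀ t, 0 ≤ t → deriv p t = v t)
    (hva : ∀ t, 0 ≤ t → deriv v t = a t)
    (hcl : ∀ t, 0 ≤ t → deriv a t = (-a t + k * q t) / ς + w) :
    Tendsto (fun t => (q t, p t, v t, a t)) atTop (𝓝 (-(ς * w / k), r, 0, 0)) := by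
  have hς' : 0 < 1 - ς := sub_pos.2 hς1
  have hα : 0 < 1 / (1 - ς) := by positivity
  have hk0 : 0 < k := hα.trans hk
  have dq : ∀ t, 0 ≤ t → HasDerivAt q (r - (p t + v t + a t)) t := fun t ht =>
    hqe t ht ▸ (hq t).hasDerivAt
  have dp : ∀ t, 0 ≤ t → HasDerivAt p (v t) t := fun t ht => hpv t ht ▸ (hp t).hasDerivAt
  have dv : ∀ t, 0 ≤ t → HasDerivAt v (a t) t := fun t ht => hva t ht ▸ (hv t).hasDerivAt
  have da : ∀ t, 0 ≤ t → HasDerivAt a ((-a t + k * q t) / ς + w) t := fun t ht =>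
    hcl t ht ▸ (ha t).hasDerivAt
  obtain ⟨l₁, l₂, l₃, l₄⟩ := tendsto_zero_of_schwarz_form (α := 1 / (1 - ς))
    (β := k - 1 / (1 - ς)) (γ := k * (1 - ς) / ς) (δ := 1 / ς)
    (x₁ := fun t => p t - r) (x₂ := v) (x₃ := fun t => a t + 1 / (1 - ς) * (p t - r))
    (x₄ := fun t => (-a t + k * q t) / ς + w + k * v t)
    hα (sub_pos.2 hk) (by positivity) (by positivity)
    (fun t ht => (dp t ht).sub_const r)
    (fun t ht => (dv t ht).congr_deriv (by ring))
    (fun t ht => ((da t ht).add (((dp t ht).sub_const r).const_mul _)).congr_deriv (by ring))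
    (fun t ht => (((((da t ht).neg.add ((dq t ht).const_mul k)).div_const ς).add_const w).add
      ((dv t ht).const_mul k)).congr_deriv (by field_simp; ring))
  have lp : Tendsto p atTop (𝓝 r) := by simpa using l₁.add_const r
  have la : Tendsto a atTop (𝓝 0) := by simpa using l₃.sub (l₁.const_mul (1 / (1 - ς)))
  have lq : Tendsto q atTop (𝓝 (-(ς * w / k))) := by
    have h := ((((l₄.sub (l₂.const_mul k)).sub_const w).const_mul ς).add la).div_const k
    convert h using 2
    · field_simp
      ring
    · ring
  exact lq.prodMk_nhds (lp.prodMk_nhds (l₂.prodMk_nhds la))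
end
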